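/- An element P ∈ C₆ is a minimal projection if and only if it has one of the following forms: (1) the matrix with 1 in entry (3,3) and all other entries 0; (2) [[0,0,0],[0,α,a],[0,a⋄,α⁻¹‖a‖²]] with α ∈ ℝ∖{0}, a ∈ 𝕆_ℝ and α = α² + ‖a‖²; (3) [[α,a,b],[a⋄,α⁻¹‖a‖²,α⁻¹(a⋄⬝b)],[b⋄,α⁻¹(b⋄⬝a),α⁻¹‖b‖²]] with α ∈ ℝ∖{0}, a, b ∈ 𝕆_ℝ and α = α² + ‖a‖² + ‖b‖² (real and complex scalars being regarded as elements of ℂ·1 ⊆ 𝕆). -/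

import Mathlib

/-!
The quadratic operator `U_X Y = 2 (X∘Y)∘X − (X∘X)∘Y` satisfies `{X, Y, X} = U_X (Y*)` and is
governed by the Freudenthal adjoint `X^#`, whose entries are the `2 × 2` minors of `X`:
`U_X Y = tr(X∘Y) X − X^# × Y` and `X∘X = X^# + tr(X) X − tr(X^#) 𝟏`.

If `U_P Y ∈ ℂ·P` for all `Y`, then `P^# × Y ∈ ℂ·P` for all `Y`, which forces `P^# = 0`; the second
identity then reads `P∘P = tr(P) P`. Hence the minimal projections are exactly the `P = P*` in `C₆`
with `P^# = 0` and `tr(P) = 1`. The three forms are the solutions of these equations sorted by the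
first nonzero diagonal entry: its row determines the other rows since all minors vanish, while a
vanishing diagonal entry kills its whole row since `‖·‖²` is definite on `𝕆_ℝ`.
-/

noncomputable section

open Matrix

/-- The biquaternions `ℍ_ℂ`. -/
abbrev HC : Type := Quaternion ℂ

/-- The `ℂ`-linear quaternion conjugation `x ↦ x⋄` on `ℍ_ℂ`. -/
def qdia (x : HC) : HC := ⟨x.re, -x.imI, -x.imJ, -x.imK⟩

/-- Coefficientwise complex conjugation `x ↦ x̄` on `ℍ_ℂ`. -/
def qbar (x : HC) : HC :=
  ⟨starRingEnd ℂ x.re, starRingEnd ℂ x.imI, starRingEnd ℂ x.imJ, starRingEnd ℂ x.imK⟩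

/-- The complex octonions `𝕆`, modelled as pairs of biquaternions. -/
abbrev Oct : Type := HC × HC

/-- Cayley–Dickson multiplication on `𝕆`. -/
def omul (x y : Oct) : Oct :=
  (x.1 * y.1 - y.2 * qdia x.2, qdia x.1 * y.2 + y.1 * x.2)

/-- The octonion unit `1 = (1, 0)`. -/
def oone : Oct := (1, 0)

/-- The linear involution `x ↦ x⋄` on `𝕆`. -/
def odia (x : Oct) : Oct := (qdia x.1, -x.2)

/-- The conjugation `x ↦ x̄` on `𝕆`. -/
def obar (x : Oct) : Oct := (qbar x.1, qbar x.2)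

/-- The conjugate-linear involution `x* = (x⋄)‾` on `𝕆`. -/
def ostar (x : Oct) : Oct := obar (odia x)

/-- `3×3` matrices of complex octonions. -/
abbrev M3O : Type := Matrix (Fin 3) (Fin 3) Oct

/-- Matrix product formed using the octonion multiplication `⬝` on entries. -/
def mmulO (X Y : M3O) : M3O := Matrix.of fun i j => ∑ k : Fin 3, omul (X i k) (Y k j)

/-- The Jordan product `X∘Y = ½(X⬝Y + Y⬝X)` on `M₃(𝕆)`. -/
def jord (X Y : M3O) : M3O := (2⁻¹ : ℂ) • (mmulO X Y + mmulO Y X)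

/-- The transpose with `⋄` applied entrywise, `Xᵈ`. -/
def mdia (X : M3O) : M3O := Matrix.of fun i j => odia (X j i)

/-- The involution `X*`: the conjugation `x ↦ x̄` applied entrywise. -/
def mstar (X : M3O) : M3O := Matrix.of fun i j => obar (X i j)

/-- The Cartan factor of type 6: `C₆ = H₃(𝕆) = {X ∈ M₃(𝕆) : Xᵈ = X}`. -/
def H3O : Set M3O := {X | mdia X = X}

/-- The triple product `{X,Y,Z} = (X∘Y*)∘Z + (Z∘Y*)∘X − (X∘Z)∘Y*` on `C₆`. -/
def trip (X Y Z : M3O) : M3O :=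
  jord (jord X (mstar Y)) Z + jord (jord Z (mstar Y)) X - jord (jord X Z) (mstar Y)

/-- The identity matrix `𝟏` of `M₃(𝕆)`. -/
def oneM : M3O := Matrix.of fun i j => if i = j then oone else 0

/-- A Jordan `*`-automorphism of `C₆`: a (ℂ-)linear bijection of `C₆ = H₃(𝕆)` onto itself
preserving the Jordan product `∘` and the involution `*`. -/
def IsJordanStarAut (T : M3O → M3O) : Prop :=
  Set.BijOn T H3O H3O ∧
  (∀ X ∈ H3O, ∀ Y ∈ H3O, T (X + Y) = T X + T Y) ∧
  (∀ (c : ℂ), ∀ X ∈ H3O, T (c • X) = c • T X) ∧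
  (∀ X ∈ H3O, ∀ Y ∈ H3O, T (jord X Y) = jord (T X) (T Y)) ∧
  (∀ X ∈ H3O, T (mstar X) = mstar (T X))

/-- The embedding `ℂ·1 ⊆ 𝕆` of complex scalars into the octonions. -/
def cO (z : ℂ) : Oct := ((⟨z, 0, 0, 0⟩ : HC), 0)

/-- The squared Euclidean norm (as a complex number) of an octonion in coordinates;
for a real octonion `a` (i.e. `obar a = a`) this is `‖a‖²`, the squared Euclidean
norm of `a ∈ ℝ⁸`. -/
def onSq (a : Oct) : ℂ :=
  a.1.re ^ 2 + a.1.imI ^ 2 + a.1.imJ ^ 2 + a.1.imK ^ 2 +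
    a.2.re ^ 2 + a.2.imI ^ 2 + a.2.imJ ^ 2 + a.2.imK ^ 2

/-- A projection in `C₆`: `P ∈ H₃(𝕆)` with `P* = P` and `P∘P = P`. -/
def IsProjO (P : M3O) : Prop := P ∈ H3O ∧ mstar P = P ∧ jord P P = P

/-- A minimal projection in `C₆`: a nonzero projection `P` with `{P,X,P} ∈ ℂ·P`
for every `X ∈ C₆`. -/
def IsMinProjO (P : M3O) : Prop :=
  IsProjO P ∧ P ≠ 0 ∧ ∀ X ∈ H3O, ∃ c : ℂ, trip P X P = c • P

open scoped Quaternion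

/-! ### Octonions -/

/-- The symmetric bilinear form on `𝕆` polarizing the quadratic form `onSq`. -/
def oform : LinearMap.BilinForm ℂ Oct :=
  LinearMap.mk₂ ℂ
    (fun x y => x.1.re * y.1.re + x.1.imI * y.1.imI + x.1.imJ * y.1.imJ + x.1.imK * y.1.imK +
      x.2.re * y.2.re + x.2.imI * y.2.imI + x.2.imJ * y.2.imJ + x.2.imK * y.2.imK)
    (fun _ _ _ => by simp; ring) (fun _ _ _ => by simp; ring)
    (fun _ _ _ => by simp; ring) (fun _ _ _ => by simp; ring)

section Octonions

@[simp] lemma qdia_eq_star (x : HC) : qdia x = star x := by ext <;> simp [qdia]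

@[simp] lemma qbar_re (x : HC) : (qbar x).re = starRingEnd ℂ x.re := rfl
@[simp] lemma qbar_imI (x : HC) : (qbar x).imI = starRingEnd ℂ x.imI := rfl
@[simp] lemma qbar_imJ (x : HC) : (qbar x).imJ = starRingEnd ℂ x.imJ := rfl
@[simp] lemma qbar_imK (x : HC) : (qbar x).imK = starRingEnd ℂ x.imK := rfl

@[simp] lemma cO_re (t : ℂ) : (cO t).1.re = t := rfl
@[simp] lemma cO_imI (t : ℂ) : (cO t).1.imI = 0 := rfl
@[simp] lemma cO_imJ (t : ℂ) : (cO t).1.imJ = 0 := rfl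
@[simp] lemma cO_imK (t : ℂ) : (cO t).1.imK = 0 := rfl
@[simp] lemma cO_snd (t : ℂ) : (cO t).2 = 0 := rfl

variable (s t : ℂ) (x y z : Oct)

-- Stated separately because `simp` and `rw` fail to unify the instances of `zero_smul` on `Oct`.
lemma zero_smul_oct : (0 : ℂ) • x = 0 := zero_smul ℂ x

lemma cO_zero : cO 0 = 0 := rfl

lemma cO_one : cO 1 = oone := rfl

lemma cO_eq_smul_oone : cO t = t • oone := by ext <;> simp [oone]

lemma cO_add : cO (s + t) = cO s + cO t := by ext <;> simp

lemma cO_sub : cO (s - t) = cO s - cO t := by ext <;> simp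

lemma cO_mul : cO (s * t) = s • cO t := by ext <;> simp

lemma odia_zero : odia 0 = 0 := by ext <;> simp [odia]

lemma odia_cO : odia (cO t) = cO t := by ext <;> simp [odia]

lemma odia_odia : odia (odia x) = x := by simp [odia]

lemma odia_add : odia (x + y) = odia x + odia y := by
  ext <;> simp [odia] <;> ring

lemma odia_smul : odia (t • x) = t • odia x := by ext <;> simp [odia]

lemma odia_sub : odia (x - y) = odia x - odia y := by
  ext <;> simp [odia] <;> ring

lemma odia_add_self : odia x + x = (2 : ℂ) • cO x.1.re := by
  ext <;> simp [odia]; ring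

lemma omul_add_left : omul (x + y) z = omul x z + omul y z := by
  ext <;> simp [omul] <;> ring

lemma omul_add_right : omul x (y + z) = omul x y + omul x z := by
  ext <;> simp [omul] <;> ring

lemma omul_sub_left : omul (x - y) z = omul x z - omul y z := by
  ext <;> simp [omul] <;> ring

lemma omul_sub_right : omul x (y - z) = omul x y - omul x z := by
  ext <;> simp [omul] <;> ring

lemma omul_smul_left : omul (t • x) y = t • omul x y := by
  ext <;> simp [omul] <;> ring

lemma omul_smul_right : omul x (t • y) = t • omul x y := by
  ext <;> simp [omul] <;> ring

lemma omul_zero_left : omul 0 x = 0 := by ext <;> simp [omul]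

lemma omul_zero_right : omul x 0 = 0 := by ext <;> simp [omul]

lemma omul_cO_left : omul (cO t) x = t • x := by ext <;> simp [omul]

lemma omul_cO_right : omul x (cO t) = t • x := by ext <;> simp [omul] <;> ring

lemma odia_omul : odia (omul x y) = omul (odia y) (odia x) := by
  ext <;> simp [odia, omul] <;> ring

lemma oform_comm : oform x y = oform y x := by
  simp only [oform, LinearMap.mk₂_apply]; ring

lemma oform_self : oform x x = onSq x := by
  simp only [oform, onSq, LinearMap.mk₂_apply]; ring

lemma oform_odia_odia : oform (odia x) (odia y) = oform x y := by
  simp [oform, odia]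

lemma oform_omul_odia : oform x (omul y (odia z)) = oform (omul x z) y := by
  simp [oform, omul, odia]; ring

lemma oform_odia_omul : oform y (omul (odia x) z) = oform (omul x y) z := by
  simp [oform, omul, odia]; ring

lemma onSq_zero : onSq 0 = 0 := by simp [onSq]

lemma onSq_smul : onSq (t • x) = t ^ 2 * onSq x := by
  simp only [← oform_self, map_smul, LinearMap.smul_apply, smul_eq_mul]; ring

lemma onSq_add : onSq (x + y) = onSq x + onSq y + 2 * oform x y := by
  simp only [← oform_self, map_add, LinearMap.add_apply, oform_comm y x]; ring

lemma onSq_odia : onSq (odia x) = onSq x := by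
  simp only [← oform_self, oform_odia_odia]

lemma omul_odia_self : omul x (odia x) = cO (onSq x) := by
  ext <;> simp [omul, odia, onSq] <;> ring

lemma omul_odia_add : omul x (odia y) + omul y (odia x) = cO (2 * oform x y) := by
  have h := omul_odia_self (x + y)
  simp only [odia_add, omul_add_left, omul_add_right, onSq_add, omul_odia_self, cO_add] at h
  linear_combination (norm := module) h

lemma odia_omul_add : omul (odia x) y + omul (odia y) x = cO (2 * oform x y) := by
  simpa only [odia_odia, oform_odia_odia] using omul_odia_add (odia x) (odia y)

lemma omul_omul_odia : omul x (omul (odia x) z) = onSq x • z := by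
  ext <;> simp [omul, odia, onSq] <;> ring

lemma omul_odia_omul : omul (odia x) (omul x z) = onSq x • z := by
  simpa only [odia_odia, onSq_odia] using omul_omul_odia (odia x) z

lemma onSq_omul : onSq (omul x y) = onSq x * onSq y := by
  rw [← oform_self, ← oform_odia_omul, omul_odia_omul, map_smul, oform_self, smul_eq_mul]

lemma omul_omul_odia_right : omul (omul z x) (odia x) = onSq x • z := by
  simpa only [odia_omul, odia_odia, odia_smul] using congrArg odia (omul_omul_odia x (odia z))

lemma omul_odia_omul_right : omul (omul z (odia x)) x = onSq x • z := by
  simpa only [odia_odia, onSq_odia] using omul_omul_odia_right (odia x) z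

lemma omul_omul_odia_add :
    omul x (omul (odia y) z) + omul y (omul (odia x) z) = (2 * oform x y) • z := by
  have h := omul_omul_odia (x + y) z
  simp only [odia_add, omul_add_left, omul_add_right, onSq_add, omul_omul_odia] at h
  linear_combination (norm := module) h

lemma omul_omul_odia_right_add :
    omul (omul z x) (odia y) + omul (omul z y) (odia x) = (2 * oform x y) • z := by
  have h := omul_omul_odia_right (x + y) z
  simp only [odia_add, omul_add_left, omul_add_right, onSq_add, omul_omul_odia_right] at h
  linear_combination (norm := module) h

lemma omul_odia_omul_add :
    omul (odia x) (omul y z) + omul (odia y) (omul x z) = (2 * oform x y) • z := by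
  simpa only [odia_odia, oform_odia_odia] using omul_omul_odia_add (odia x) (odia y) z

lemma omul_odia_omul_right_add :
    omul (omul z (odia x)) y + omul (omul z (odia y)) x = (2 * oform x y) • z := by
  simpa only [odia_odia, oform_odia_odia] using omul_omul_odia_right_add (odia x) (odia y) z

lemma obar_zero : obar 0 = 0 := by ext <;> simp [obar]

lemma obar_cO : obar (cO t) = cO (starRingEnd ℂ t) := by ext <;> simp [obar]

lemma obar_obar : obar (obar x) = x := by ext <;> simp [obar]

lemma obar_smul : obar (t • x) = starRingEnd ℂ t • obar x := by ext <;> simp [obar]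

lemma obar_odia : obar (odia x) = odia (obar x) := by ext <;> simp [obar, odia]

lemma obar_omul : obar (omul x y) = omul (obar x) (obar y) := by
  ext <;> simp [obar, omul]

lemma onSq_obar : onSq (obar x) = starRingEnd ℂ (onSq x) := by simp [obar, onSq]

open Complex in
lemma onSq_eq_sum_normSq {x : Oct} (hx : obar x = x) : onSq x =
    (normSq x.1.re + normSq x.1.imI + normSq x.1.imJ + normSq x.1.imK +
      normSq x.2.re + normSq x.2.imI + normSq x.2.imJ + normSq x.2.imK : ℝ) := by
  have hsq (f : Oct → ℂ) (hf : f (obar x) = starRingEnd ℂ (f x)) : f x ^ 2 = normSq (f x) := by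
    rw [normSq_eq_conj_mul_self, ← hf, hx, sq]
  push_cast
  rw [← hsq (·.1.re) rfl, ← hsq (·.1.imI) rfl, ← hsq (·.1.imJ) rfl, ← hsq (·.1.imK) rfl,
    ← hsq (·.2.re) rfl, ← hsq (·.2.imI) rfl, ← hsq (·.2.imJ) rfl, ← hsq (·.2.imK) rfl, onSq]

lemma eq_zero_of_onSq_eq_zero {x : Oct} (hx : obar x = x) (h : onSq x = 0) : x = 0 := by
  have hnonneg := Complex.normSq_nonneg
  rw [onSq_eq_sum_normSq hx, Complex.ofReal_eq_zero] at h
  ext <;> refine Complex.normSq_eq_zero.1 (le_antisymm ?_ (hnonneg _)) <;>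
    linarith [hnonneg x.1.re, hnonneg x.1.imI, hnonneg x.1.imJ, hnonneg x.1.imK,
      hnonneg x.2.re, hnonneg x.2.imI, hnonneg x.2.imJ, hnonneg x.2.imK]

end Octonions

/-! ### Coordinates on `C₆` -/

/-- The element of `C₆` with diagonal `α, β, γ` and entries `a, b, c` at `(1,2), (1,3), (2,3)`. -/
def herm (α β γ : ℂ) (a b c : Oct) : M3O :=
  !![cO α, a, b;
     odia a, cO β, c;
     odia b, odia c, cO γ]

/-- The trace of an element of `C₆`; the diagonal entries of such an element lie in `ℂ·1`. -/
def trO (X : M3O) : ℂ := (X 0 0).1.re + (X 1 1).1.re + (X 2 2).1.re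

section Coordinates

variable (t α β γ α' β' γ' : ℂ) (a b c a' b' c' : Oct)

lemma herm_mem_H3O : herm α β γ a b c ∈ H3O := by
  change mdia _ = _
  ext1 i j
  fin_cases i <;> fin_cases j <;> simp [herm, mdia, odia_cO, odia_odia]

lemma eq_cO_of_odia_eq_self {x : Oct} (h : odia x = x) : x = cO x.1.re := by
  linear_combination (norm := module) (2⁻¹ : ℂ) • odia_add_self x - (2⁻¹ : ℂ) • h

lemma exists_eq_herm {X : M3O} (hX : X ∈ H3O) :
    ∃ α β γ a b c, X = herm α β γ a b c := by
  have h (i j) : odia (X j i) = X i j := congrFun₂ hX i j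
  refine ⟨(X 0 0).1.re, (X 1 1).1.re, (X 2 2).1.re, X 0 1, X 0 2, X 1 2, ?_⟩
  ext1 i j
  fin_cases i <;> fin_cases j <;> simp [herm, h, ← eq_cO_of_odia_eq_self (h _ _)]

lemma herm_inj : herm α β γ a b c = herm α' β' γ' a' b' c' ↔
    α = α' ∧ β = β' ∧ γ = γ' ∧ a = a' ∧ b = b' ∧ c = c' := by
  refine ⟨fun h ↦ ?_, by rintro ⟨rfl, rfl, rfl, rfl, rfl, rfl⟩; rfl⟩
  have hre (i) := congrArg (fun X : M3O ↦ (X i i).1.re) h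
  exact ⟨hre 0, hre 1, hre 2, congrFun₂ h 0 1, congrFun₂ h 0 2, congrFun₂ h 1 2⟩

lemma herm_zero : herm 0 0 0 0 0 0 = 0 := by
  ext1 i j
  fin_cases i <;> fin_cases j <;> simp [herm, cO_zero, odia_zero]

lemma oneM_eq_herm : oneM = herm 1 1 1 0 0 0 := by
  ext1 i j
  fin_cases i <;> fin_cases j <;> simp [herm, oneM, cO_one, odia_zero]

lemma herm_zero_zero_one : herm 0 0 1 0 0 0 = !![0, 0, 0; 0, 0, 0; 0, 0, oone] := by
  rw [herm, cO_zero, odia_zero, cO_one]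

lemma herm_zero_left : herm 0 β γ 0 0 c = !![0, 0, 0; 0, cO β, c; 0, odia c, cO γ] := by
  rw [herm, cO_zero, odia_zero]

lemma herm_smul_odia_omul : herm α β γ a b (α⁻¹ • omul (odia a) b) =
    !![cO α, a, b;
       odia a, cO β, α⁻¹ • omul (odia a) b;
       odia b, α⁻¹ • omul (odia b) a, cO γ] := by
  rw [herm, odia_smul, odia_omul, odia_odia]

lemma herm_add : herm α β γ a b c + herm α' β' γ' a' b' c' =
    herm (α + α') (β + β') (γ + γ') (a + a') (b + b') (c + c') := by
  ext1 i j
  fin_cases i <;> fin_cases j <;> simp [herm, cO_add, odia_add]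

lemma herm_sub : herm α β γ a b c - herm α' β' γ' a' b' c' =
    herm (α - α') (β - β') (γ - γ') (a - a') (b - b') (c - c') := by
  ext1 i j
  fin_cases i <;> fin_cases j <;> simp [herm, cO_sub, odia_sub]

lemma smul_herm : t • herm α β γ a b c =
    herm (t * α) (t * β) (t * γ) (t • a) (t • b) (t • c) := by
  ext1 i j
  fin_cases i <;> fin_cases j <;> simp [herm, cO_mul, odia_smul, -Prod.smul_mk]

lemma mstar_herm : mstar (herm α β γ a b c) =
    herm (starRingEnd ℂ α) (starRingEnd ℂ β) (starRingEnd ℂ γ) (obar a) (obar b) (obar c) := by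
  ext1 i j
  fin_cases i <;> fin_cases j <;> simp [herm, mstar, obar_cO, obar_odia]

lemma mstar_mstar (X : M3O) : mstar (mstar X) = X := by
  ext1 i j
  simp [mstar, obar_obar]

lemma mstar_mem_H3O {X : M3O} (hX : X ∈ H3O) : mstar X ∈ H3O := by
  obtain ⟨α, β, γ, a, b, c, rfl⟩ := exists_eq_herm hX
  rw [mstar_herm]
  exact herm_mem_H3O ..

lemma trO_herm : trO (herm α β γ a b c) = α + β + γ := rfl

lemma jord_herm : jord (herm α β γ a b c) (herm α' β' γ' a' b' c') =
    herm (α * α' + oform a a' + oform b b') (β * β' + oform a a' + oform c c')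
      (γ * γ' + oform b b' + oform c c')
      ((2⁻¹ : ℂ) • ((α + β) • a' + (α' + β') • a + omul b (odia c') + omul b' (odia c)))
      ((2⁻¹ : ℂ) • ((α + γ) • b' + (α' + γ') • b + omul a c' + omul a' c))
      ((2⁻¹ : ℂ) • ((β + γ) • c' + (β' + γ') • c + omul (odia a) b' + omul (odia a') b)) := by
  have h₁ := omul_odia_add a a'
  have h₂ := odia_omul_add a a'
  have h₃ := omul_odia_add b b'
  have h₄ := odia_omul_add b b'
  have h₅ := omul_odia_add c c'
  have h₆ := odia_omul_add c c'
  ext1 i j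
  fin_cases i <;> fin_cases j <;>
    simp only [jord, herm, mmulO, Fin.sum_univ_three, of_apply, Matrix.smul_apply,
      Matrix.add_apply, cons_val,
      Fin.zero_eta, Fin.mk_one, Fin.reduceFinMk, omul_cO_left, omul_cO_right,
      odia_smul, odia_add, odia_omul, odia_odia]
  all_goals simp only [cO_eq_smul_oone] at *
  · linear_combination (norm := module) (2⁻¹ : ℂ) • h₁ + (2⁻¹ : ℂ) • h₃
  · module
  · module
  · module
  · linear_combination (norm := module) (2⁻¹ : ℂ) • h₂ + (2⁻¹ : ℂ) • h₅
  · module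
  · module
  · module
  · linear_combination (norm := module) (2⁻¹ : ℂ) • h₄ + (2⁻¹ : ℂ) • h₆

end Coordinates

/-! ### The Freudenthal adjoint -/

/-- The Freudenthal adjoint `X^#` of an element of `C₆`, whose entries are its `2 × 2` minors. -/
def adjO (X : M3O) : M3O :=
  herm ((X 1 1).1.re * (X 2 2).1.re - onSq (X 1 2)) ((X 0 0).1.re * (X 2 2).1.re - onSq (X 0 2))
    ((X 0 0).1.re * (X 1 1).1.re - onSq (X 0 1))
    (omul (X 0 2) (odia (X 1 2)) - (X 2 2).1.re • X 0 1)
    (omul (X 0 1) (X 1 2) - (X 1 1).1.re • X 0 2)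
    (omul (odia (X 0 1)) (X 0 2) - (X 0 0).1.re • X 1 2)

/-- The Freudenthal cross product `X × Y = (X + Y)^# − X^# − Y^#` on `C₆`. -/
def crossO (X Y : M3O) : M3O := adjO (X + Y) - adjO X - adjO Y

/-- The quadratic operator `U_X Y = 2 (X∘Y)∘X − (X∘X)∘Y` of the Jordan algebra `C₆`. -/
def jordU (X Y : M3O) : M3O := (2 : ℂ) • jord (jord X Y) X - jord (jord X X) Y

section Adjoint

variable (α β γ p q r : ℂ) (a b c x y z : Oct)

lemma adjO_herm : adjO (herm α β γ a b c) =
    herm (β * γ - onSq c) (α * γ - onSq b) (α * β - onSq a)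
      (omul b (odia c) - γ • a) (omul a c - β • b) (omul (odia a) b - α • c) := rfl

lemma crossO_herm : crossO (herm α β γ a b c) (herm p q r x y z) =
    herm (β * r + γ * q - 2 * oform c z) (α * r + γ * p - 2 * oform b y)
      (α * q + β * p - 2 * oform a x)
      (omul b (odia z) + omul y (odia c) - γ • x - r • a)
      (omul a z + omul x c - β • y - q • b)
      (omul (odia a) y + omul (odia x) b - α • z - p • c) := by
  simp only [crossO, herm_add, adjO_herm, herm_sub, herm_inj, onSq_add, odia_add, omul_add_left,
    omul_add_right]
  refine ⟨?_, ?_, ?_, ?_, ?_, ?_⟩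
  iterate 3 ring
  iterate 3 module

lemma jordU_herm : jordU (herm α β γ a b c) (herm p q r x y z) =
    trO (jord (herm α β γ a b c) (herm p q r x y z)) • herm α β γ a b c -
      crossO (adjO (herm α β γ a b c)) (herm p q r x y z) := by
  simp only [jordU, jord_herm, trO_herm, smul_herm, adjO_herm, crossO_herm, herm_sub, herm_inj]
  refine ⟨?_, ?_, ?_, ?_, ?_, ?_⟩
  iterate 3
    simp only [map_add, map_sub, map_smul, LinearMap.add_apply, LinearMap.sub_apply,
      LinearMap.smul_apply, smul_eq_mul, oform_self, oform_omul_odia, oform_odia_omul,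
      oform_comm (omul _ (odia _)), oform_comm (omul (odia _) _), oform_comm x a, oform_comm y b,
      oform_comm z c]
    ring
  all_goals simp only [omul_add_left, omul_add_right, omul_sub_left, omul_sub_right,
    omul_smul_left, omul_smul_right, odia_add, odia_sub, odia_smul, odia_omul, odia_odia,
    oform_self]
  · linear_combination (norm := module) (2⁻¹ : ℂ) •
      (omul_omul_odia_add b y a + omul_omul_odia b x +
        omul_omul_odia_right_add c z a + omul_omul_odia_right c x)
  · linear_combination (norm := module) (2⁻¹ : ℂ) •
      (omul_omul_odia_add a x b + omul_omul_odia a y +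
        omul_odia_omul_right_add c z b + omul_odia_omul_right c y)
  · linear_combination (norm := module) (2⁻¹ : ℂ) •
      (omul_odia_omul_add a x c + omul_odia_omul a z +
        omul_odia_omul_right_add b y c + omul_odia_omul_right b z)

lemma jord_self_herm : jord (herm α β γ a b c) (herm α β γ a b c) =
    adjO (herm α β γ a b c) + trO (herm α β γ a b c) • herm α β γ a b c -
      trO (adjO (herm α β γ a b c)) • oneM := by
  simp only [jord_herm, oneM_eq_herm, trO_herm, smul_herm, adjO_herm, herm_add, herm_sub, herm_inj,
    oform_self]
  refine ⟨?_, ?_, ?_, ?_, ?_, ?_⟩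
  iterate 3 ring
  iterate 3 module

end Adjoint

lemma jordU_eq {X Y : M3O} (hX : X ∈ H3O) (hY : Y ∈ H3O) :
    jordU X Y = trO (jord X Y) • X - crossO (adjO X) Y := by
  obtain ⟨α, β, γ, a, b, c, rfl⟩ := exists_eq_herm hX
  obtain ⟨p, q, r, x, y, z, rfl⟩ := exists_eq_herm hY
  exact jordU_herm ..

lemma jord_self_eq {X : M3O} (hX : X ∈ H3O) :
    jord X X = adjO X + trO X • X - trO (adjO X) • oneM := by
  obtain ⟨α, β, γ, a, b, c, rfl⟩ := exists_eq_herm hX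
  exact jord_self_herm ..

lemma adjO_zero : adjO 0 = 0 := by
  simp only [← herm_zero, adjO_herm, onSq_zero, omul_zero_left, omul_zero_right, mul_zero,
    zero_smul_oct, sub_zero]

lemma crossO_zero_left (Y : M3O) : crossO 0 Y = 0 := by
  rw [crossO, zero_add, adjO_zero, sub_zero, sub_self]

lemma trO_zero : trO 0 = 0 := by simp [trO]

lemma trip_self (X Y : M3O) : trip X Y X = jordU X (mstar Y) := by
  rw [trip, jordU, two_smul ℂ (jord (jord X (mstar Y)) X)]

/-! ### Minimal projections -/

lemma eq_zero_of_neg_eq_smul {t : ℂ} {x y : Oct} (h : -x = t • y) (h' : t • x = 0) : x = 0 := by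
  by_cases ht : t = 0
  · rwa [ht, zero_smul_oct, neg_eq_zero] at h
  · rw [← inv_smul_smul₀ ht x, h', smul_zero]

lemma adjO_eq_zero_of_crossO_eq_smul {X : M3O} (hX : X ∈ H3O)
    (h : ∀ Y ∈ H3O, ∃ t : ℂ, crossO (adjO X) Y = t • X) : adjO X = 0 := by
  obtain ⟨α, β, γ, a, b, c, rfl⟩ := exists_eq_herm hX
  -- The diagonal matrix units already detect every entry of `X^#`.
  obtain ⟨s, hs⟩ := h _ (herm_mem_H3O 1 0 0 0 0 0)
  obtain ⟨t, ht⟩ := h _ (herm_mem_H3O 0 1 0 0 0 0)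
  obtain ⟨u, hu⟩ := h _ (herm_mem_H3O 0 0 1 0 0 0)
  simp only [adjO_herm, crossO_herm, smul_herm, herm_inj, map_zero, mul_zero, mul_one,
    zero_smul_oct, one_smul, omul_zero_left, omul_zero_right, odia_zero, smul_zero, add_zero,
    zero_add, sub_zero, zero_sub, sub_self] at hs ht hu
  obtain ⟨hsα, hsβ, hsγ, -, hsb, hsc⟩ := hs
  obtain ⟨htα, htβ, htγ, hta, htb, -⟩ := ht
  obtain ⟨huα, huβ, huγ, hua, hub, -⟩ := hu
  have h₁ : β * γ - onSq c = 0 :=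
    sq_eq_zero_iff.1 (by linear_combination (β * γ - onSq c) * htγ + t * γ * huβ - u * γ * htβ)
  have h₂ : α * γ - onSq b = 0 :=
    sq_eq_zero_iff.1 (by linear_combination (α * γ - onSq b) * hsγ + s * γ * huα - u * γ * hsα)
  have h₃ : α * β - onSq a = 0 :=
    sq_eq_zero_iff.1 (by linear_combination (α * β - onSq a) * hsβ + s * β * htα - t * β * hsα)
  have h₁₂ : omul b (odia c) - γ • a = 0 := by
    refine eq_zero_of_neg_eq_smul hua ?_
    rw [smul_sub, ← omul_smul_left, ← hub, omul_zero_left, smul_smul, ← huγ, zero_smul_oct,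
      sub_zero]
  have h₁₃ : omul a c - β • b = 0 := by
    refine eq_zero_of_neg_eq_smul htb ?_
    rw [smul_sub, ← omul_smul_left, ← hta, omul_zero_left, smul_smul, ← htβ, zero_smul_oct,
      sub_zero]
  have h₂₃ : omul (odia a) b - α • c = 0 := by
    refine eq_zero_of_neg_eq_smul hsc ?_
    rw [smul_sub, ← omul_smul_right, ← hsb, omul_zero_right, smul_smul, ← hsα, zero_smul_oct,
      sub_zero]
  rw [adjO_herm, h₁, h₂, h₃, h₁₂, h₁₃, h₂₃, herm_zero]

lemma isMinProjO_iff {P : M3O} :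
    IsMinProjO P ↔ P ∈ H3O ∧ mstar P = P ∧ adjO P = 0 ∧ trO P = 1 := by
  constructor
  · rintro ⟨⟨hP, hstar, hidem⟩, hne, hmin⟩
    have hadj : adjO P = 0 := by
      refine adjO_eq_zero_of_crossO_eq_smul hP fun Y hY ↦ ?_
      obtain ⟨t, ht⟩ := hmin _ (mstar_mem_H3O hY)
      rw [trip_self, mstar_mstar, jordU_eq hP hY] at ht
      exact ⟨trO (jord P Y) - t, by rw [sub_smul (trO _) t P, ← ht, sub_sub_cancel]⟩
    have htr : trO P • P = (1 : ℂ) • P := by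
      rw [one_smul]
      nth_rw 3 [← hidem]
      rw [jord_self_eq hP, hadj, trO_zero, zero_add, zero_smul ℂ oneM, sub_zero]
    exact ⟨hP, hstar, hadj, smul_left_injective ℂ hne htr⟩
  · rintro ⟨hP, hstar, hadj, htr⟩
    refine ⟨⟨hP, hstar, ?_⟩, ?_, fun X hX ↦ ⟨trO (jord P (mstar X)), ?_⟩⟩
    · rw [jord_self_eq hP, hadj, htr, trO_zero, zero_add, one_smul, zero_smul ℂ oneM, sub_zero]
    · rintro rfl
      exact zero_ne_one (trO_zero.symm.trans htr)
    · rw [trip_self, jordU_eq hP (mstar_mem_H3O hX), hadj, crossO_zero_left, sub_zero]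

section Forms

variable {α β γ : ℂ} {a b c : Oct}

lemma isMinProjO_herm_iff : IsMinProjO (herm α β γ a b c) ↔
    (starRingEnd ℂ α = α ∧ starRingEnd ℂ β = β ∧ starRingEnd ℂ γ = γ ∧
      obar a = a ∧ obar b = b ∧ obar c = c) ∧
    (β * γ = onSq c ∧ α * γ = onSq b ∧ α * β = onSq a ∧
      omul b (odia c) = γ • a ∧ omul a c = β • b ∧ omul (odia a) b = α • c) ∧
    α + β + γ = 1 := by
  rw [isMinProjO_iff, and_iff_right (herm_mem_H3O ..), mstar_herm, adjO_herm, ← herm_zero,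
    herm_inj, herm_inj, trO_herm]
  simp only [sub_eq_zero]

lemma isMinProjO_herm_iff_of_ne_zero (hα : α ≠ 0) : IsMinProjO (herm α β γ a b c) ↔
    starRingEnd ℂ α = α ∧ obar a = a ∧ obar b = b ∧ β = α⁻¹ * onSq a ∧ γ = α⁻¹ * onSq b ∧
      c = α⁻¹ • omul (odia a) b ∧ α = α ^ 2 + onSq a + onSq b := by
  rw [isMinProjO_herm_iff]
  constructor
  · rintro ⟨⟨hα', -, -, ha, hb, -⟩, ⟨-, hαγ, hαβ, -, -, hc⟩, htr⟩
    refine ⟨hα', ha, hb, ?_, ?_, ?_, ?_⟩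
    · rw [← hαβ, inv_mul_cancel_left₀ hα]
    · rw [← hαγ, inv_mul_cancel_left₀ hα]
    · rw [hc, inv_smul_smul₀ hα]
    · linear_combination hαβ + hαγ - α * htr
  · rintro ⟨hα', ha, hb, rfl, rfl, rfl, htr⟩
    refine ⟨⟨hα', ?_, ?_, ha, hb, ?_⟩, ⟨?_, ?_, ?_, ?_, ?_, ?_⟩, ?_⟩
    · rw [map_mul, map_inv₀, hα', ← onSq_obar, ha]
    · rw [map_mul, map_inv₀, hα', ← onSq_obar, hb]
    · rw [obar_smul, obar_omul, obar_odia, map_inv₀, hα', ha, hb]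
    · rw [onSq_smul, onSq_omul, onSq_odia]
      ring
    · rw [mul_inv_cancel_left₀ hα]
    · rw [mul_inv_cancel_left₀ hα]
    · rw [odia_smul, odia_omul, odia_odia, omul_smul_right, omul_omul_odia, smul_smul]
    · rw [omul_smul_right, omul_omul_odia, smul_smul]
    · rw [smul_inv_smul₀ hα]
    · field_simp
      linear_combination -htr

lemma isMinProjO_herm_zero_iff_of_ne_zero (hβ : β ≠ 0) : IsMinProjO (herm 0 β γ a b c) ↔
    a = 0 ∧ b = 0 ∧ starRingEnd ℂ β = β ∧ obar c = c ∧ γ = β⁻¹ * onSq c ∧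
      β = β ^ 2 + onSq c := by
  rw [isMinProjO_herm_iff]
  constructor
  · rintro ⟨⟨-, hβ', -, ha, hb, hc⟩, ⟨hβγ, hb₀, ha₀, -, -, -⟩, htr⟩
    refine ⟨eq_zero_of_onSq_eq_zero ha ?_, eq_zero_of_onSq_eq_zero hb ?_, hβ', hc, ?_, ?_⟩
    · rw [← ha₀, zero_mul]
    · rw [← hb₀, zero_mul]
    · rw [← hβγ, inv_mul_cancel_left₀ hβ]
    · linear_combination hβγ - β * htr
  · rintro ⟨rfl, rfl, hβ', hc, rfl, htr⟩
    simp only [map_zero, map_mul, map_inv₀, hβ', hc, ← onSq_obar c, obar_zero, onSq_zero,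
      odia_zero, omul_zero_left, omul_zero_right, smul_zero, zero_smul_oct, zero_mul, zero_add,
      mul_inv_cancel_left₀ hβ, and_self, true_and]
    field_simp
    linear_combination -htr

lemma isMinProjO_herm_zero_zero_iff : IsMinProjO (herm 0 0 γ a b c) ↔
    a = 0 ∧ b = 0 ∧ c = 0 ∧ γ = 1 := by
  rw [isMinProjO_herm_iff]
  constructor
  · rintro ⟨⟨-, -, -, ha, hb, hc⟩, ⟨hc₀, hb₀, ha₀, -, -, -⟩, htr⟩
    rw [zero_mul, eq_comm] at ha₀ hb₀ hc₀
    exact ⟨eq_zero_of_onSq_eq_zero ha ha₀, eq_zero_of_onSq_eq_zero hb hb₀,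
      eq_zero_of_onSq_eq_zero hc hc₀, by linear_combination htr⟩
  · rintro ⟨rfl, rfl, rfl, rfl⟩
    simp [obar_zero, odia_zero, onSq_zero, omul_zero_left]

end Forms

/-- The minimal projections in `C₆` are exactly the elements of one of the
three displayed forms. -/
theorem statement13 (P : M3O) :
    IsMinProjO P ↔
    (P = !![0, 0, 0; 0, 0, 0; 0, 0, oone]) ∨
    (∃ (α : ℝ) (a : Oct), α ≠ 0 ∧ obar a = a ∧ (α : ℂ) = (α : ℂ) ^ 2 + onSq a ∧
      P = !![0, 0, 0;
             0, cO (α : ℂ), a;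
             0, odia a, cO ((α : ℂ)⁻¹ * onSq a)]) ∨
    (∃ (α : ℝ) (a b : Oct), α ≠ 0 ∧ obar a = a ∧ obar b = b ∧
      (α : ℂ) = (α : ℂ) ^ 2 + onSq a + onSq b ∧
      P = !![cO (α : ℂ), a, b;
             odia a, cO ((α : ℂ)⁻¹ * onSq a), (α : ℂ)⁻¹ • omul (odia a) b;
             odia b, (α : ℂ)⁻¹ • omul (odia b) a, cO ((α : ℂ)⁻¹ * onSq b)]) := by
  constructor
  · intro h
    obtain ⟨α, β, γ, a, b, c, rfl⟩ := exists_eq_herm h.1.1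
    by_cases hα : α = 0
    · subst hα
      by_cases hβ : β = 0
      · subst hβ
        obtain ⟨rfl, rfl, rfl, rfl⟩ := isMinProjO_herm_zero_zero_iff.1 h
        exact .inl herm_zero_zero_one
      · obtain ⟨rfl, rfl, hβ', hc, rfl, htr⟩ := (isMinProjO_herm_zero_iff_of_ne_zero hβ).1 h
        obtain ⟨β, rfl⟩ := Complex.conj_eq_iff_real.1 hβ'
        exact .inr (.inl ⟨β, c, Complex.ofReal_ne_zero.1 hβ, hc, htr, herm_zero_left ..⟩)
    · obtain ⟨hα', ha, hb, rfl, rfl, rfl, htr⟩ := (isMinProjO_herm_iff_of_ne_zero hα).1 h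
      obtain ⟨α, rfl⟩ := Complex.conj_eq_iff_real.1 hα'
      exact .inr (.inr ⟨α, a, b, Complex.ofReal_ne_zero.1 hα, ha, hb, htr,
        herm_smul_odia_omul ..⟩)
  · rintro (rfl | ⟨α, a, hα, ha, htr, rfl⟩ | ⟨α, a, b, hα, ha, hb, htr, rfl⟩)
    · rw [← herm_zero_zero_one, isMinProjO_herm_zero_zero_iff]
      exact ⟨rfl, rfl, rfl, rfl⟩
    · rw [← herm_zero_left, isMinProjO_herm_zero_iff_of_ne_zero (Complex.ofReal_ne_zero.2 hα)]
      exact ⟨rfl, rfl, Complex.conj_ofReal α, ha, rfl, htr⟩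
    · rw [← herm_smul_odia_omul, isMinProjO_herm_iff_of_ne_zero (Complex.ofReal_ne_zero.2 hα)]
      exact ⟨Complex.conj_ofReal α, ha, hb, rfl, rfl, rfl, htr⟩
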